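/- For every k ≥ 1 and every n ≥ 2, the space Hom(ℤ^k, SL(n,ℂ)) of commuting k-tuples in the special linear group SL(n,ℂ) (with its usual matrix topology) is path-connected and simply connected. -/

import Mathlib

open CategoryTheory
open scoped Manifold

/-- The space `Hom(ℤᵏ, G)` of commuting `k`-tuples in `G`, topologized as a subspace
of `Gᵏ`. -/
def commTuples (G : Type) [Group G] (k : ℕ) : Set (Fin k → G) :=
  {x | ∀ i j, x i * x j = x j * x i}

/-- The trivial tuple `𝟙 = (1, …, 1)`. -/
def trivTuple (G : Type) [Group G] (k : ℕ) : commTuples G k :=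
  ⟨1, fun _ _ => rfl⟩

/-- `SL(n, ℂ)`, topologized as a subspace of the `n × n` complex matrices. -/
noncomputable instance (n : ℕ) : TopologicalSpace (Matrix.SpecialLinearGroup (Fin n) ℂ) :=
  instTopologicalSpaceSubtype

/-!
A commuting tuple `x` is joined to its semisimple part, whose entries are simultaneously
diagonalizable, by segments that consist of commuting tuples of determinant one. Call a homotopy
class of paths from `𝟙` *toral* if it is represented by a path inside a single maximal torus, and
call a class ending at `x` *good* if continuing it to the semisimple part of `x` makes it toral.
Good classes exist at every `x`, and continuing a good class along any path keeps it good. So it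
remains to see that good loops at `𝟙` are trivial. Up to homotopy such a loop lies in a maximal
torus, hence is a product of loops of the form `diag(l, 1, …, 1, l⁻¹)` in a single entry of the
tuple, and a path of conjugations moves the factor `l⁻¹` on top of `l` and thereby contracts the
loop.

The semisimple part does not depend continuously on `x`, so goodness cannot be transported with it
directly. For `y` near `x` it is replaced by `u y • z`, where `z` is the semisimple part of `x` and
the conjugation `u y` depends continuously on `y` and is such that `u y • z` commutes with
everything that commutes with `y`; along the segments from `y` to `u y • z` the determinants stay
near one, so that the segments can be rescaled. To find `u`, choose coefficients `c` such that
`∑ c i • z i` has the same centralizer as the tuple `z`, and conjugate `∑ c i • y i` into this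
centralizer by means of the inverse function theorem.
-/

open Matrix unitInterval Topology
open scoped MatrixGroups

section LinearAlgebra

variable {K ι m : Type*} [Field K] [Fintype m] [DecidableEq m]

theorem det_one_add_of_isNilpotent {N : Matrix m m K} (hN : IsNilpotent N) : (1 + N).det = 1 := by
  have hchar : (-N).charpoly = Polynomial.X ^ Fintype.card m :=
    sub_eq_zero.mp (isNilpotent_charpoly_sub_pow_of_isNilpotent hN.neg).eq_zero
  simpa [hchar] using (eval_charpoly (-N) 1).symm

theorem det_add_of_isNilpotent {M N : Matrix m m K} (hMN : Commute M N) (hN : IsNilpotent N) :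
    (M + N).det = M.det := by
  by_cases hM : IsUnit M
  · obtain ⟨u, rfl⟩ := hM
    have hfactor : (u : Matrix m m K) + N = u * (1 + u⁻¹.val * N) := by
      rw [mul_add, mul_one, Units.mul_inv_cancel_left]
    rw [hfactor, det_mul, det_one_add_of_isNilpotent
      (hMN.units_inv_left.isNilpotent_mul_left hN), mul_one]
  · have hMN' : ¬ IsUnit (M + N) := fun h => hM <| by
      simpa using hN.neg.isUnit_add_left_of_commute h
        ((hMN.add_left (Commute.refl N)).neg_right.symm)
    rw [isUnit_iff_isUnit_det, isUnit_iff_ne_zero, not_not] at hM hMN'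
    rw [hM, hMN']

/-- The matrix `A` is diagonal in the basis formed by the columns of `h`. -/
def IsDiagIn (h : GL m K) (A : Matrix m m K) : Prop :=
  (h⁻¹.val * A * h).IsDiag

theorem isDiagIn_iff_exists_eq {h : GL m K} {A : Matrix m m K} :
    IsDiagIn h A ↔ ∃ d : m → K, A = h * diagonal d * h⁻¹.val := by
  constructor
  · intro hA
    refine ⟨diag (h⁻¹.val * A * h), ?_⟩
    rw [hA.diagonal_diag]
    simp only [mul_assoc, Units.mul_inv_cancel_left, Units.mul_inv, mul_one]
  · rintro ⟨d, rfl⟩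
    simp only [IsDiagIn, mul_assoc, Units.inv_mul_cancel_left, Units.inv_mul, mul_one]
    exact isDiag_diagonal d

theorem IsDiagIn.commute {h : GL m K} {A B : Matrix m m K} (hA : IsDiagIn h A)
    (hB : IsDiagIn h B) : Commute A B := by
  obtain ⟨d, rfl⟩ := isDiagIn_iff_exists_eq.mp hA
  obtain ⟨d', rfl⟩ := isDiagIn_iff_exists_eq.mp hB
  change _ * _ = _ * _
  simp only [mul_assoc, Units.inv_mul_cancel_left]
  simp only [← mul_assoc (diagonal _) (diagonal _), diagonal_mul_diagonal, mul_comm]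

theorem isDiagIn_one (h : GL m K) : IsDiagIn h 1 :=
  isDiagIn_iff_exists_eq.mpr ⟨1, by simp⟩

theorem IsDiagIn.add {h : GL m K} {A B : Matrix m m K} (hA : IsDiagIn h A)
    (hB : IsDiagIn h B) : IsDiagIn h (A + B) := by
  simpa only [IsDiagIn, mul_add, add_mul] using IsDiag.add hA hB

theorem IsDiagIn.smul {h : GL m K} {A : Matrix m m K} (c : K) (hA : IsDiagIn h A) :
    IsDiagIn h (c • A) := by
  simpa only [IsDiagIn, mul_smul_comm, smul_mul_assoc] using IsDiag.smul c hA

theorem isDiagIn_sum {h : GL m K} (s : Finset ι) {A : ι → Matrix m m K}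
    (hA : ∀ i, IsDiagIn h (A i)) : IsDiagIn h (∑ i ∈ s, A i) :=
  Finset.sum_induction A (IsDiagIn h) (fun _ _ => IsDiagIn.add)
    (by simpa using (isDiagIn_one h).smul 0) fun i _ => hA i

theorem isSemisimple_toLin'_diagonal (d : m → K) :
    Module.End.IsSemisimple (toLin' (diagonal d)) := by
  classical
  let q : Polynomial K := ∏ μ ∈ Finset.univ.image d, (Polynomial.X - Polynomial.C μ)
  have hq : Squarefree q := (Polynomial.separable_prod_X_sub_C_iff'.mpr
    fun _ _ _ _ hab => hab).squarefree
  have hroot : Polynomial.aeval d q = 0 := by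
    ext i
    simp only [q, Polynomial.aeval_fn_apply, Pi.zero_apply, map_prod]
    exact Finset.prod_eq_zero (Finset.mem_image_of_mem d (Finset.mem_univ i)) (by simp)
  refine Module.End.isSemisimple_of_squarefree_aeval_eq_zero hq ?_
  change Polynomial.aeval (toLinAlgEquiv' (diagonalAlgHom K d)) q = 0
  rw [Polynomial.aeval_algHom_apply,
    Polynomial.aeval_algHom_apply, hroot, map_zero, map_zero]

theorem IsDiagIn.isSemisimple_toLin' {h : GL m K} {A : Matrix m m K} (hA : IsDiagIn h A) :
    Module.End.IsSemisimple (toLin' A) := by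
  obtain ⟨d, rfl⟩ := isDiagIn_iff_exists_eq.mp hA
  refine (LinearEquiv.isSemisimple_iff _ _ ((h : Matrix m m K).toLinearEquiv' h.invertible) ?_).mp
    (isSemisimple_toLin'_diagonal d)
  rw [toLinearEquiv'_apply, ← toLin'_mul, ← toLin'_mul]
  simp only [mul_assoc, Units.inv_mul, mul_one]

theorem exists_isSemisimple_isNilpotent_sub [PerfectField K] (a : Matrix m m K) :
    ∃ s : Matrix m m K, Module.End.IsSemisimple (toLin' s) ∧ IsNilpotent (a - s) ∧
      ∀ A, Commute A a → Commute A s := by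
  obtain ⟨n, -, s, hs, hnil, hss, ha⟩ :=
    Module.End.exists_isNilpotent_isSemisimple (f := toLin' a)
  obtain ⟨s, rfl⟩ := (toLinAlgEquiv' (R := K) (n := m)).surjective s
  refine ⟨s, hss, ?_, fun A hA => ?_⟩
  · rwa [← IsNilpotent.map_iff (toLinAlgEquiv' (R := K) (n := m)).injective, map_sub,
      show toLinAlgEquiv' a = n + toLinAlgEquiv' s from ha, add_sub_cancel_right]
  · exact .of_map (toLinAlgEquiv' (R := K) (n := m)).injective
      (Algebra.commute_of_mem_adjoin_singleton_of_commute hs (hA.map toLinAlgEquiv'))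

theorem commute_of_isNilpotent_sub [PerfectField K] {a s A : Matrix m m K}
    (hss : Module.End.IsSemisimple (toLin' s)) (has : Commute a s) (hnil : IsNilpotent (a - s))
    (hA : Commute A a) : Commute A s := by
  obtain ⟨s', hss', hnil', hs'⟩ := exists_isSemisimple_isNilpotent_sub a
  have heq : toLin' s = toLin' s' :=
    (Module.End.isNilpotent_isSemisimple_unique (hnil.map toLinAlgEquiv') hss
      (hnil'.map toLinAlgEquiv') hss'
      ((has.sub_left (Commute.refl s)).map toLinAlgEquiv')
      (((hs' a (Commute.refl a)).sub_left (Commute.refl s')).map toLinAlgEquiv')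
      (by
        change toLinAlgEquiv' (a - s) + toLinAlgEquiv' s =
          toLinAlgEquiv' (a - s') + toLinAlgEquiv' s'
        simp only [← map_add, sub_add_cancel])).2
  rw [toLin'.injective heq]
  exact hs' A hA

theorem exists_basis_eigenvectors [IsAlgClosed K] {f : ι → Matrix m m K}
    (hcomm : ∀ i j, Commute (f i) (f j)) (hss : ∀ i, Module.End.IsSemisimple (toLin' (f i))) :
    ∃ b : Module.Basis m K (m → K), ∀ j i, ∃ μ : K, f i *ᵥ b j = μ • b j := by
  set S : Set (m → K) := {v | ∀ i, ∃ μ : K, f i *ᵥ v = μ • v}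
  have hS : ⊤ ≤ Submodule.span K S := by
    rw [← Module.End.iSup_iInf_maxGenEigenspace_eq_top_of_iSup_maxGenEigenspace_eq_top_of_commute
      (fun i => toLin' (f i)) (fun i j _ => (hcomm i j).map toLinAlgEquiv')
      (fun i => Module.End.iSup_maxGenEigenspace_eq_top _)]
    refine iSup_le fun χ v hv => Submodule.subset_span fun i => ⟨χ i, ?_⟩
    rw [Submodule.mem_iInf] at hv
    simpa only [(hss i).isFinitelySemisimple.maxGenEigenspace_eq_eigenspace,
      Module.End.mem_eigenspace_iff, toLin'_apply] using hv i
  let b := Module.Basis.ofSpan hS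
  let e := b.indexEquiv (Pi.basisFun K m)
  exact ⟨b.reindex e, fun j => Module.Basis.ofSpan_subset hS ⟨e.symm j, by simp [b]⟩⟩

theorem exists_isDiagIn_of_isSemisimple [IsAlgClosed K] {f : ι → Matrix m m K}
    (hcomm : ∀ i j, Commute (f i) (f j)) (hss : ∀ i, Module.End.IsSemisimple (toLin' (f i))) :
    ∃ h : GL m K, ∀ i, IsDiagIn h (f i) := by
  obtain ⟨b, hb⟩ := exists_basis_eigenvectors hcomm hss
  choose μ hμ using hb
  let h : GL m K := ⟨(Pi.basisFun K m).toMatrix b, b.toMatrix (Pi.basisFun K m),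
    Module.Basis.toMatrix_mul_toMatrix_flip _ _, Module.Basis.toMatrix_mul_toMatrix_flip _ _⟩
  refine ⟨h, fun i => isDiagIn_iff_exists_eq.mpr ⟨fun j => μ j i, ?_⟩⟩
  have heigen : f i * h = h * diagonal fun j => μ j i := by
    ext r j
    rw [mul_diagonal, mul_comm]
    exact congrFun (hμ j i) r
  rw [← heigen, mul_assoc, Units.mul_inv, mul_one]

theorem exists_isDiagIn_isNilpotent_sub [IsAlgClosed K] {x : ι → Matrix m m K}
    (hcomm : ∀ i j, Commute (x i) (x j)) :
    ∃ (h : GL m K) (z : ι → Matrix m m K), (∀ i, IsDiagIn h (z i)) ∧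
      (∀ i, IsNilpotent (x i - z i)) ∧ ∀ i A, Commute A (x i) → Commute A (z i) := by
  choose z hss hnil hz using fun i => exists_isSemisimple_isNilpotent_sub (x i)
  have hzz (i j) : Commute (z i) (z j) := hz j _ (hz i _ (hcomm j i)).symm
  obtain ⟨h, hh⟩ := exists_isDiagIn_of_isSemisimple hzz hss
  exact ⟨h, z, hh, hnil, hz⟩

theorem commute_conj_iff {M : Type*} [Monoid M] (h : Mˣ) {a b : M} :
    Commute a (h * b * h⁻¹.val) ↔ Commute (h⁻¹.val * a * h) b := by
  rw [Commute, SemiconjBy, Commute, SemiconjBy, ← Units.mul_right_inj h⁻¹,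
    ← Units.mul_left_inj h]
  simp only [mul_assoc, Units.inv_mul_cancel_left, Units.inv_mul, mul_one]

theorem commute_diagonal_iff {A : Matrix m m K} {d : m → K} :
    Commute A (diagonal d) ↔ ∀ p q, A p q ≠ 0 → d p = d q := by
  simp only [Commute, SemiconjBy, ← Matrix.ext_iff, mul_diagonal, diagonal_mul]
  refine forall₂_congr fun p q => ?_
  rw [mul_comm, mul_eq_mul_right_iff]
  grind

theorem IsDiagIn.commute_of_commute_lie {h : GL m K} {s X : Matrix m m K} (hs : IsDiagIn h s)
    (hX : Commute (s * X - X * s) s) : Commute X s := by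
  obtain ⟨d, rfl⟩ := isDiagIn_iff_exists_eq.mp hs
  set X' := h⁻¹.val * X * h
  have hlie : h⁻¹.val * (h * diagonal d * h⁻¹.val * X -
      X * (h * diagonal d * h⁻¹.val)) * h = diagonal d * X' - X' * diagonal d := by
    simp only [X', mul_sub, sub_mul, mul_assoc, Units.inv_mul_cancel_left, Units.inv_mul, mul_one]
  rw [commute_conj_iff, hlie, commute_diagonal_iff] at hX
  rw [commute_conj_iff, commute_diagonal_iff]
  intro p q hpq
  by_contra hne
  refine hne (hX p q ?_)
  rw [Matrix.sub_apply, diagonal_mul, mul_diagonal, mul_comm, ← mul_sub]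
  exact mul_ne_zero hpq (sub_ne_zero.mpr hne)

theorem exists_sum_mul_injective {κ : Type*} [Finite κ] [Infinite K] [Fintype ι]
    (χ : κ → ι → K) :
    ∃ c : ι → K, ∀ p q, ∑ i, c i * χ p i = ∑ i, c i * χ q i → χ p = χ q := by
  classical
  obtain ⟨f, hf⟩ := Module.exists_dual_forall_apply_ne_zero (K := K)
    (fun pq : {pq : κ × κ // χ pq.1 ≠ χ pq.2} => χ pq.1.1 - χ pq.1.2)
    fun pq => sub_ne_zero.mpr pq.2
  have hf_apply (v : ι → K) : ∑ i, f (Pi.single i 1) * v i = f v := by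
    conv_rhs => rw [pi_eq_sum_univ' v, map_sum]
    simp [mul_comm]
  refine ⟨fun i => f (Pi.single i 1), fun p q h => ?_⟩
  by_contra hne
  apply hf ⟨(p, q), hne⟩
  rw [map_sub, sub_eq_zero, ← hf_apply, ← hf_apply, h]

theorem exists_commute_of_commute_sum [Infinite K] [Fintype ι] {h : GL m K}
    {z : ι → Matrix m m K} (hz : ∀ i, IsDiagIn h (z i)) :
    ∃ c : ι → K, ∀ A, Commute A (∑ i, c i • z i) → ∀ i, Commute A (z i) := by
  choose d hd using fun i => isDiagIn_iff_exists_eq.mp (hz i)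
  obtain ⟨c, hc⟩ := exists_sum_mul_injective fun p i => d i p
  have hsum : ∑ i, c i • z i =
      h * diagonal (fun p => ∑ i, c i * d i p) * h⁻¹.val := by
    have hdiag : diagonal (fun p => ∑ i, c i * d i p) = ∑ i, c i • diagonal (d i) := by
      ext p q
      rcases eq_or_ne p q with rfl | hpq <;> simp [Matrix.sum_apply, *]
    simp only [hdiag, Finset.mul_sum, Finset.sum_mul, mul_smul_comm, smul_mul_assoc, ← hd]
  refine ⟨c, fun A hA i => ?_⟩
  rw [hsum, commute_conj_iff, commute_diagonal_iff] at hA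
  rw [hd, commute_conj_iff, commute_diagonal_iff]
  exact fun p q hpq => congrFun (hc p q (hA p q hpq)) i

theorem exists_perm_of_mul_diagonal_eq {M : Matrix m m K} (hM : M.det ≠ 0) {d d' : ι → m → K}
    (h : ∀ i, M * diagonal (d i) = diagonal (d' i) * M) :
    ∃ π : Equiv.Perm m, ∀ i, d' i = d i ∘ π.symm := by
  rw [det_apply] at hM
  obtain ⟨π, -, hπ⟩ := Finset.exists_ne_zero_of_sum_ne_zero hM
  have hentry (j) : M (π j) j ≠ 0 := fun h0 => hπ <| by
    exact smul_eq_zero_of_right _ (Finset.prod_eq_zero (Finset.mem_univ j) h0)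
  refine ⟨π, fun i => funext fun p => ?_⟩
  have := congrFun (congrFun (h i) p) (π.symm p)
  rw [mul_diagonal, diagonal_mul, mul_comm] at this
  exact (mul_right_cancel₀ (by simpa using hentry (π.symm p)) this).symm

theorem permMatrixHom_mul_diagonal (π : Equiv.Perm m) (c : m → K) :
    permMatrixHom (R := K) π * diagonal c = diagonal (c ∘ π.symm) * permMatrixHom (R := K) π := by
  ext p q
  by_cases hpq : π.symm p = q <;>
    simp [Equiv.Perm.permMatrix, PEquiv.toMatrix_apply, mul_diagonal, diagonal_mul,
      Equiv.Perm.inv_def, hpq]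

theorem exists_commute_isDiagIn_conj {h g : GL m K} {z : ι → Matrix m m K}
    (hz : ∀ i, IsDiagIn h (z i)) (hz' : ∀ i, IsDiagIn g (z i)) :
    ∃ u : GL m K, (∀ i, Commute (z i) u) ∧ ∀ A, IsDiagIn h A → IsDiagIn g (u * A * u⁻¹.val) := by
  choose d hd using fun i => isDiagIn_iff_exists_eq.mp (hz i)
  choose d' hd' using fun i => isDiagIn_iff_exists_eq.mp (hz' i)
  have hintertwine (i) : (g⁻¹ * h).val * diagonal (d i) = diagonal (d' i) * (g⁻¹ * h).val := by
    have := congrArg (fun A => g⁻¹.val * A * h) ((hd i).symm.trans (hd' i))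
    simpa only [Units.val_mul, mul_assoc, Units.inv_mul_cancel_left, Units.inv_mul, mul_one]
      using this
  obtain ⟨π, hπ⟩ := exists_perm_of_mul_diagonal_eq
    ((isUnit_iff_isUnit_det _).mp (g⁻¹ * h).isUnit).ne_zero hintertwine
  set P : GL m K := permMatrixHom.toHomUnits π
  have hP (c : m → K) : P.val * diagonal c = diagonal (c ∘ π.symm) * P :=
    permMatrixHom_mul_diagonal π c
  have hconj (c : m → K) : (g * P * h⁻¹).val * (h * diagonal c * h⁻¹.val) =
      (g * diagonal (c ∘ π.symm) * g⁻¹.val) * (g * P * h⁻¹).val := by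
    simp only [Units.val_mul, mul_assoc, Units.inv_mul_cancel_left]
    simp only [← mul_assoc P.val, hP, mul_assoc]
  refine ⟨g * P * h⁻¹, fun i => ?_, fun A hA => ?_⟩
  · have := hconj (d i)
    rw [← hπ, ← hd, ← hd'] at this
    exact this.symm
  · obtain ⟨c, rfl⟩ := isDiagIn_iff_exists_eq.mp hA
    rw [hconj, Units.mul_inv_cancel_right]
    exact isDiagIn_iff_exists_eq.mpr ⟨_, rfl⟩

end LinearAlgebra

section Segments

open AffineMap (lineMap lineMap_apply_module)

variable {K m : Type*} [Field K] [Fintype m] [DecidableEq m]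

theorem commute_lineMap_right {R A : Type*} [Ring R] [Ring A] [Module R A] [SMulCommClass R A A]
    [IsScalarTower R A A] {x y z : A} (hy : Commute x y) (hz : Commute x z) (c : R) :
    Commute x (lineMap y z c) := by
  rw [lineMap_apply_module]
  exact (hy.smul_right _).add_right (hz.smul_right _)

theorem IsDiagIn.lineMap {h : GL m K} {A B : Matrix m m K} (hA : IsDiagIn h A) (hB : IsDiagIn h B)
    (c : K) : IsDiagIn h (lineMap A B c) := by
  rw [lineMap_apply_module]
  exact (hA.smul _).add (hB.smul _)

theorem det_lineMap_lineMap_of_isNilpotent {A B C : Matrix m m K} (hAB : Commute A B)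
    (hAC : Commute A C) (hBC : Commute B C) (hN : IsNilpotent (A - B)) (s t : K) :
    (lineMap (lineMap A B t) C s).det = (lineMap A C s).det := by
  have hsplit : lineMap (lineMap A B t) C s = lineMap A C s + -((1 - s) * t) • (A - B) := by
    simp only [lineMap_apply_module]
    module
  have hcomm : Commute (A - B) (lineMap A C s) :=
    commute_lineMap_right ((Commute.refl A).sub_left hAB.symm) (hAC.sub_left hBC) s
  rw [hsplit, det_add_of_isNilpotent (hcomm.symm.smul_right _) (hN.smul _)]

theorem det_lineMap_of_isNilpotent {A B : Matrix m m K} (hAB : Commute A B)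
    (hN : IsNilpotent (A - B)) (t : K) : (lineMap A B t).det = A.det := by
  simpa using det_lineMap_lineMap_of_isNilpotent hAB (Commute.refl A) hAB.symm hN 0 t

/-- The rescaling of `A` to determinant one by the principal branch of the root, which is continuous
as long as the determinant of `A` stays off the negative real axis; for `A.det = 0` it is a junk
value. -/
noncomputable def normalizeDet (A : Matrix m m ℂ) : Matrix m m ℂ :=
  A.det ^ (-(1 : ℂ) / Fintype.card m) • A

theorem normalizeDet_of_det_eq_one {A : Matrix m m ℂ} (hA : A.det = 1) : normalizeDet A = A := by
  rw [normalizeDet, hA, Complex.one_cpow, one_smul]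

theorem det_normalizeDet {A : Matrix m m ℂ} (hA : A.det ≠ 0) : (normalizeDet A).det = 1 := by
  cases isEmpty_or_nonempty m
  · exact det_isEmpty
  · rw [normalizeDet, det_smul, ← Complex.cpow_mul_nat,
      div_mul_cancel₀ _ (Nat.cast_ne_zero.mpr Fintype.card_ne_zero), Complex.cpow_neg_one,
      inv_mul_cancel₀ hA]

theorem continuousOn_normalizeDet :
    ContinuousOn normalizeDet {A : Matrix m m ℂ | A.det ∈ Complex.slitPlane} := by
  have hdet : Continuous (det : Matrix m m ℂ → ℂ) := by fun_prop
  exact (hdet.continuousOn.cpow continuousOn_const fun _ hA => hA).smul continuousOn_id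

end Segments

section Slice

variable {R : Type*} [NormedRing R] [NormedAlgebra ℂ R]

theorem isPathConnected_setOf_isUnit_one_sub_smul {N : R} (hN : (spectrum ℂ N).Finite) :
    IsPathConnected {ζ : ℂ | IsUnit (1 - ζ • N)} := by
  have hsub : {ζ : ℂ | IsUnit (1 - ζ • N)}ᶜ ⊆ (·⁻¹) '' spectrum ℂ N := fun ζ hζ => by
    have hζ0 : ζ ≠ 0 := by
      rintro rfl
      simp at hζ
    refine ⟨ζ⁻¹, fun hu => hζ ?_, inv_inv ζ⟩
    have hfactor : 1 - ζ • N = Units.mk0 ζ hζ0 • (algebraMap ℂ R ζ⁻¹ - N) := by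
      simp [Units.smul_def, smul_sub, Algebra.algebraMap_eq_smul_one, smul_smul, hζ0]
    change IsUnit (1 - ζ • N)
    rw [hfactor, isUnit_smul_iff]
    exact hu
  rw [← compl_compl {ζ : ℂ | IsUnit (1 - ζ • N)}]
  exact ((hN.image _).subset hsub).countable.isPathConnected_compl_of_one_lt_rank
    (by simp [Complex.rank_real_complex])

theorem exists_path_units [CompleteSpace R] (c : Rˣ) (hc : (spectrum ℂ (1 - c : R)).Finite) :
    ∃ v : Path 1 c, ∀ t (A : R), Commute A c → Commute A (v t : R) := by
  have hpc := isPathConnected_setOf_isUnit_one_sub_smul hc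
  obtain ⟨γ, hγ⟩ := hpc.joinedIn 0 (by simp) 1 (by simp)
  refine ⟨⟨⟨fun t => (hγ t).unit, ?_⟩, ?_, ?_⟩, fun t A hA => ?_⟩
  · rw [Units.isOpenEmbedding_val.isEmbedding.continuous_iff]
    exact continuous_const.sub (γ.continuous.smul continuous_const)
  · ext; simp
  · ext; simp
  · exact (Commute.one_right A).sub_right (((Commute.one_right A).sub_right hA).smul_right (γ t))

variable (R) in
/-- The commutator `(s, X) ↦ s * X - X * s` as a continuous bilinear map. -/
noncomputable def bracket : R →L[ℂ] R →L[ℂ] R :=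
  ContinuousLinearMap.mul ℂ R - (ContinuousLinearMap.mul ℂ R).flip

theorem bracket_apply (s X : R) : bracket R s X = s * X - X * s :=
  rfl

theorem bracket_eq_zero_iff {s X : R} : bracket R s X = 0 ↔ Commute X s := by
  rw [bracket_apply, sub_eq_zero, eq_comm]
  rfl

theorem bracket_left_comm {a s : R} (ha : Commute a s) (X : R) :
    bracket R a (bracket R s X) = bracket R s (bracket R a X) := by
  simp only [bracket_apply, mul_sub, sub_mul, ← mul_assoc, ha.eq]
  simp only [mul_assoc, ha.eq]
  abel

theorem hasStrictFDerivAt_exp_mul_mul_exp_neg [CompleteSpace R] (a : R) :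
    HasStrictFDerivAt (fun p : R × R => NormedSpace.exp p.2 * p.1 * NormedSpace.exp (-p.2))
      (.fst ℂ R R + (bracket R).flip a ∘L .snd ℂ R R) (a, 0) := by
  have hexp : HasStrictFDerivAt (𝕜 := ℂ) (NormedSpace.exp : R → R) (.id ℂ R) 0 :=
    hasStrictFDerivAt_exp_zero
  have hpos : HasStrictFDerivAt (fun p : R × R => NormedSpace.exp p.2) (.snd ℂ R R) (a, 0) :=
    HasStrictFDerivAt.comp (a, (0 : R)) (f := Prod.snd) hexp hasStrictFDerivAt_snd
  have hneg : HasStrictFDerivAt (fun p : R × R => NormedSpace.exp (-p.2))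
      (-.snd ℂ R R) (a, 0) := by
    refine HasStrictFDerivAt.comp (a, (0 : R)) (g' := .id ℂ R) ?_ hasStrictFDerivAt_snd.neg
    rwa [Pi.neg_apply, neg_zero]
  refine ((hpos.mul' hasStrictFDerivAt_fst).mul' hneg).congr_fderiv ?_
  ext x
  · simp
  · simp [bracket_apply, sub_eq_neg_add]

variable [FiniteDimensional ℂ R] {a s : R}

theorem exists_continuousLinearEquiv_add_bracket (ha : Commute a s)
    (has : ∀ X, Commute X a → Commute X s)
    (hs : ∀ X, bracket R s (bracket R s X) = 0 → bracket R s X = 0) :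
    ∃ e : ((bracket R s).ker × (bracket R s).range) ≃L[ℂ] R,
      ∀ p, e p = p.1 + bracket R p.2 a := by
  let e₀ : ((bracket R s).ker × (bracket R s).range) →ₗ[ℂ] R :=
    (bracket R s).ker.subtype.coprod
      ((bracket R).flip a ∘ₗ (bracket R s).range.subtype)
  have hinj : Function.Injective e₀ := by
    rw [injective_iff_map_eq_zero]
    rintro ⟨⟨c, hc⟩, ⟨_, X, rfl⟩⟩ h
    replace h : c + bracket R (bracket R s X) a = 0 := h
    have hYa : bracket R a (bracket R s (bracket R s X)) = 0 := by
      have hflip : bracket R a (bracket R s X) = c := by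
        rw [eq_comm, ← sub_eq_zero, ← h]
        simp only [bracket_apply]
        abel
      rw [bracket_left_comm ha, hflip]
      exact hc
    have hY : bracket R s X = 0 :=
      hs X (hs _ (bracket_eq_zero_iff.mpr (has _ (bracket_eq_zero_iff.mp hYa))))
    have hc0 : c = 0 := by simpa [hY] using h
    simp [hc0, hY]
  have hrank : Module.finrank ℂ ((bracket R s).ker × (bracket R s).range) =
      Module.finrank ℂ R := by
    rw [Module.finrank_prod, add_comm]
    exact (bracket R s : R →ₗ[ℂ] R).finrank_range_add_finrank_ker
  exact ⟨(LinearEquiv.ofInjectiveOfFinrankEq e₀ hinj hrank).toContinuousLinearEquiv, fun _ => rfl⟩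

theorem eventually_commute_of_commute (has : ∀ X, Commute X a → Commute X s)
    (hs : ∀ X, bracket R s (bracket R s X) = 0 → bracket R s X = 0) :
    ∀ᶠ c in 𝓝 a, Commute c s → ∀ X, Commute X c → Commute X s := by
  let T : R → (bracket R s).range →L[ℂ] R := fun c => bracket R c ∘L (bracket R s).range.subtypeL
  have hTcont : Continuous T := by fun_prop
  have hTa : Function.Injective (T a) := by
    rw [injective_iff_map_eq_zero]
    rintro ⟨_, X, rfl⟩ h
    exact Subtype.ext (hs X (bracket_eq_zero_iff.mpr (has _ (bracket_eq_zero_iff.mp h))))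
  filter_upwards [hTcont.continuousAt.eventually_mem
    (ContinuousLinearMap.isOpen_injective.mem_nhds hTa)] with c hc hcs X hXc
  have hbr : T c ⟨bracket R s X, X, rfl⟩ = T c 0 := by
    change bracket R c (bracket R s X) = _
    rw [bracket_left_comm hcs, bracket_eq_zero_iff.mpr hXc, map_zero, map_zero]
  exact bracket_eq_zero_iff.mp (congrArg Subtype.val (hc hbr))

theorem exists_continuousOn_conj_eq (ha : Commute a s)
    (has : ∀ X, Commute X a → Commute X s)
    (hs : ∀ X, bracket R s (bracket R s X) = 0 → bracket R s X = 0) :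
    ∃ U ∈ 𝓝 a, ∃ (c : R → R) (w : R → Rˣ), ContinuousOn c U ∧ ContinuousOn w U ∧ c a = a ∧
      w a = 1 ∧ ∀ b ∈ U, Commute (c b) s ∧ w b * c b * (w b)⁻¹.val = b := by
  have : CompleteSpace R := FiniteDimensional.complete ℂ R
  let : NormedAlgebra ℚ R := NormedAlgebra.restrictScalars ℚ ℂ R
  obtain ⟨e, he⟩ := exists_continuousLinearEquiv_add_bracket ha has hs
  let p₀ : (bracket R s).ker × (bracket R s).range := (⟨a, bracket_eq_zero_iff.mpr ha⟩, 0)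
  let ι := (bracket R s).ker.subtypeL.prodMap (bracket R s).range.subtypeL
  have hf := ((hasStrictFDerivAt_exp_mul_mul_exp_neg a).comp p₀ ι.hasStrictFDerivAt).congr_fderiv
    (g' := (e : _ →L[ℂ] R)) (by ext x <;> simp [ι, he])
  let Φ := hf.toOpenPartialHomeomorph
  have hΦp₀ : Φ p₀ = a := by simp [Φ, ι, p₀]
  have hp₀ : Φ.symm a = p₀ := hΦp₀ ▸ Φ.left_inv hf.mem_toOpenPartialHomeomorph_source
  have ha' : a ∈ Φ.target := hΦp₀ ▸ hf.image_mem_toOpenPartialHomeomorph_target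
  have hc : ContinuousOn (fun b => ((Φ.symm b).1 : R)) Φ.target :=
    (continuous_subtype_val.comp continuous_fst).comp_continuousOn Φ.symm.continuousOn
  have hY : ContinuousOn (fun b => ((Φ.symm b).2 : R)) Φ.target :=
    (continuous_subtype_val.comp continuous_snd).comp_continuousOn Φ.symm.continuousOn
  have hexp (Y : R) : NormedSpace.exp Y * NormedSpace.exp (-Y) = 1 := by
    rw [← NormedSpace.exp_add_of_commute (Commute.refl Y).neg_right, add_neg_cancel,
      NormedSpace.exp_zero]
  let w : R → Rˣ := fun b => ⟨NormedSpace.exp (Φ.symm b).2, NormedSpace.exp (-(Φ.symm b).2),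
    hexp _, by simpa only [neg_neg] using hexp (-(Φ.symm b).2)⟩
  refine ⟨Φ.target, Φ.open_target.mem_nhds ha', fun b => (Φ.symm b).1, w, hc, ?_,
    by simp [hp₀, p₀], by ext; simp [w, hp₀, p₀],
    fun b hb => ⟨bracket_eq_zero_iff.mp (Φ.symm b).1.2, Φ.right_inv hb⟩⟩
  rw [Units.isOpenEmbedding_val.isInducing.continuousOn_iff]
  exact NormedSpace.exp_continuous.comp_continuousOn hY

theorem exists_continuousOn_commute_conj (ha : Commute a s)
    (has : ∀ X, Commute X a → Commute X s)
    (hs : ∀ X, bracket R s (bracket R s X) = 0 → bracket R s X = 0) :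
    ∃ U ∈ 𝓝 a, ∃ w : R → Rˣ, ContinuousOn w U ∧ w a = 1 ∧
      ∀ b ∈ U, ∀ A, Commute A b → Commute A (w b * s * (w b)⁻¹.val) := by
  obtain ⟨U, hU, c, w, hc, hw, hca, hwa, hconj⟩ := exists_continuousOn_conj_eq ha has hs
  have hgen : ∀ᶠ b in 𝓝 a, Commute (c b) s → ∀ X, Commute X (c b) → Commute X s :=
    (hc.continuousAt hU).eventually (hca.symm ▸ eventually_commute_of_commute has hs)
  refine ⟨_, Filter.inter_mem hU hgen, w, hw.mono Set.inter_subset_left, hwa,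
    fun b ⟨hb, hgb⟩ A hA => ?_⟩
  obtain ⟨hcs, hwc⟩ := hconj b hb
  rw [commute_conj_iff]
  refine hgb hcs _ ?_
  rwa [← commute_conj_iff, hwc]

end Slice

section GeneralLinearGroup

variable {m : Type*} [Fintype m] [DecidableEq m]

theorem exists_path_generalLinearGroup (u : GL m ℂ) :
    ∃ v : Path 1 u, ∀ t (A : Matrix m m ℂ), Commute A u → Commute A (v t).val := by
  open scoped Matrix.Norms.Operator in
  exact exists_path_units u (Matrix.finite_spectrum _)

/-- The invertible diagonal matrices, as a homomorphism. -/
def diagonalUnits : (m → ℂˣ) →* GL m ℂ :=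
  (Units.map (diagonalRingHom m ℂ).toMonoidHom).comp MulEquiv.piUnits.symm.toMonoidHom

theorem val_diagonalUnits (c : m → ℂˣ) :
    (diagonalUnits c).val = diagonal fun a => (c a : ℂ) :=
  rfl

theorem continuous_diagonalUnits : Continuous (diagonalUnits : (m → ℂˣ) → GL m ℂ) := by
  refine Units.continuous_iff.mpr ⟨?_, ?_⟩
  · change Continuous fun c : m → ℂˣ => diagonal fun a => (c a : ℂ)
    fun_prop
  · change Continuous fun c : m → ℂˣ => diagonal fun a => ((c a)⁻¹.val : ℂ)
    fun_prop

theorem det_diagonalUnits (c : m → ℂˣ) : (diagonalUnits c).det = ∏ a, c a := by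
  ext
  simp [val_diagonalUnits, det_diagonal]

theorem isDiagIn_diagonalUnits (c : m → ℂˣ) : IsDiagIn 1 (diagonalUnits c).val :=
  isDiagIn_iff_exists_eq.mpr ⟨fun a => c a, by simp [val_diagonalUnits]⟩

theorem exists_conj_diagonalUnits_mulSingle (a b : m) : ∃ P : GL m ℂ, ∀ c,
    P * diagonalUnits (Pi.mulSingle a c) * P⁻¹ = diagonalUnits (Pi.mulSingle b c) := by
  refine ⟨permMatrixHom.toHomUnits (Equiv.swap a b), fun c => mul_inv_eq_of_eq_mul <| ?_⟩
  ext1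
  change permMatrixHom _ * diagonal _ = diagonal _ * permMatrixHom _
  rw [permMatrixHom_mul_diagonal]
  congr 2
  funext i
  simp [Pi.mulSingle_apply, Equiv.swap_apply_eq_iff]

end GeneralLinearGroup

section Homotopy

open Path.Homotopic.Quotient (mk trans_assoc)

variable {X : Type*} [TopologicalSpace X] {a b c d : X}

theorem mk_trans_mk_eq_of_square {f : I × I → X} (hf : Continuous f) {p : Path a b} {q : Path b d}
    {p' : Path c d} {q' : Path a c} (hp : ∀ t, p t = f (t, 0)) (hq : ∀ s, q s = f (1, s))
    (hp' : ∀ t, p' t = f (t, 1)) (hq' : ∀ s, q' s = f (0, s)) :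
    (mk p).trans (mk q) = (mk q').trans (mk p') := by
  obtain rfl : f (0, 0) = a := by rw [← hp, p.source]
  obtain rfl : f (1, 0) = b := by rw [← hp, p.target]
  obtain rfl : f (0, 1) = c := by rw [← hp', p'.source]
  obtain rfl : f (1, 1) = d := by rw [← hp', p'.target]
  let f₀ : C(I, X) := ⟨fun t => f (t, 0), by fun_prop⟩
  let f₁ : C(I, X) := ⟨fun t => f (t, 1), by fun_prop⟩
  let F : f₀.Homotopy f₁ := ⟨⟨fun st => f (st.2, st.1), by fun_prop⟩, fun _ => rfl, fun _ => rfl⟩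
  obtain rfl : p = Path.id.map (map_continuous f₀) := Path.ext (funext hp)
  obtain rfl : p' = Path.id.map (map_continuous f₁) := Path.ext (funext hp')
  obtain rfl : q = F.evalAt 1 := Path.ext (funext hq)
  obtain rfl : q' = F.evalAt 0 := Path.ext (funext hq')
  exact Path.Homotopic.Quotient.eq.mpr (Path.Homotopic.map_trans_evalAt F Path.id)

theorem forall_path_of_local_transport {G : ∀ x, Path.Homotopic.Quotient b x → Prop}
    (hlocal : ∀ x, ∃ U ∈ 𝓝 x, ∀ y z (γ : Path y z), Set.range γ ⊆ U →
      ∀ e, G y e → G z (e.trans (mk γ)))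
    {y z : X} (γ : Path y z) (e : Path.Homotopic.Quotient b y) (he : G y e) :
    G z (e.trans (mk γ)) := by
  have htransport (s t : I) : ∀ e, G (γ s) e → G (γ t) (e.trans (mk (γ.subpath s t))) := by
    refine PreconnectedSpace.induction₂' (fun s t : I => ∀ e, G (γ s) e →
      G (γ t) (e.trans (mk (γ.subpath s t)))) (fun s => ?_) ⟨fun r s t hrs hst e he => ?_⟩ s t
    · obtain ⟨U, hU, hG⟩ := hlocal (γ s)
      have hnear : ∀ᶠ t in 𝓝 s, Set.uIcc s t ⊆ γ ⁻¹' U :=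
        Filter.tendsto_smallSets_iff.mp (tendsto_const_nhds.uIcc Filter.tendsto_id) _
          (γ.continuous.continuousAt hU)
      filter_upwards [hnear] with t ht
      rw [← Set.image_subset_iff] at ht
      exact ⟨hG _ _ _ ((γ.range_subpath s t).trans_subset ht),
        hG _ _ _ ((γ.range_subpath t s).trans_subset (Set.uIcc_comm s t ▸ ht))⟩
    · have hsub : (mk (γ.subpath r s)).trans (mk (γ.subpath s t)) = mk (γ.subpath r t) :=
        Path.Homotopic.Quotient.eq.mpr ⟨Path.Homotopy.subpathTransSubpath γ r s t⟩
      rw [← hsub, ← trans_assoc]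
      exact hst _ (hrs e he)
  have hcast {y' z'} (hy : y' = y) (hz : z' = z)
      (h : ∀ e, G y' e → G z' (e.trans (mk (γ.cast hy hz)))) : G z (e.trans (mk γ)) := by
    subst hy hz
    exact h e he
  exact hcast γ.source γ.target (γ.subpath_zero_one ▸ htransport 0 1)

theorem simplyConnectedSpace_of_local_transport (b : X)
    {G : ∀ x, Path.Homotopic.Quotient b x → Prop}
    (hexists : ∀ x, ∃ e, G x e) (hbase : ∀ e, G b e → e = .refl b)
    (hlocal : ∀ x, ∃ U ∈ 𝓝 x, ∀ y z (γ : Path y z), Set.range γ ⊆ U →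
      ∀ e, G y e → G z (e.trans (mk γ))) :
    SimplyConnectedSpace X := by
  have hloop (ε : Path.Homotopic.Quotient b b) : ε = .refl b := by
    induction ε with | mk γ =>
    obtain ⟨e, he⟩ := hexists b
    obtain rfl := hbase e he
    simpa using hbase _ (forall_path_of_local_transport hlocal γ _ he)
  rw [simply_connected_iff_loops_nullhomotopic]
  refine ⟨⟨⟨b⟩, fun x y => ?_⟩, fun x γ => ?_⟩
  · obtain ⟨p⟩ := (hexists x).choose
    obtain ⟨q⟩ := (hexists y).choose
    exact ⟨p.symm.trans q⟩
  · obtain ⟨e, -⟩ := hexists x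
    rw [← Path.Homotopic.Quotient.eq]
    calc mk γ = (e.symm.trans ((e.trans (mk γ)).trans e.symm)).trans e := by
          simp only [trans_assoc]
          grind
      _ = .refl x := by simp [hloop]

variable {H X : Type*} [Group H] [TopologicalSpace H] [TopologicalSpace X]

/-- `ℓ` is a loop at the identity of a topological group whose image under `φ` is nullhomotopic.
Loops are plain functions here, so that their pointwise products can be formed. -/
def IsNullLoop (φ : C(H, X)) (ℓ : I → H) : Prop :=
  ∃ p : Path (1 : H) 1, ⇑p = ℓ ∧ mk (p.map φ.continuous) = .refl (φ 1)

theorem isNullLoop_one (φ : C(H, X)) : IsNullLoop φ 1 :=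
  ⟨Path.refl 1, rfl, rfl⟩

theorem IsNullLoop.mul [ContinuousMul H] {φ : C(H, X)} {ℓ ℓ' : I → H} (hℓ : IsNullLoop φ ℓ)
    (hℓ' : IsNullLoop φ ℓ') : IsNullLoop φ (ℓ * ℓ') := by
  obtain ⟨p, rfl, hp⟩ := hℓ
  obtain ⟨q, rfl, hq⟩ := hℓ'
  let pq : Path (1 : H) 1 := (p.mul q).cast (one_mul 1).symm (one_mul 1).symm
  have hsquare := mk_trans_mk_eq_of_square
    (f := fun ts : I × I => φ (p ts.1 * q (ts.1 * ts.2))) (p := p.map φ.continuous)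
    (q := q.map φ.continuous) (p' := pq.map φ.continuous) (q' := Path.refl (φ 1))
    (by fun_prop) (by simp) (by simp) (by simp [pq]) (by simp)
  refine ⟨pq, rfl, ?_⟩
  simpa [hp, hq] using hsquare.symm

end Homotopy

/-- The commuting tuples of matrices of determinant one, for arbitrary index types `ι` of the
tuple and `m` of the matrices; `commTuples SL(n, ℂ) k` is the case `Fin k`, `Fin n`. -/
abbrev CommTuple (ι m : Type*) [Fintype m] [DecidableEq m] : Type _ :=
  {x : ι → Matrix m m ℂ // (∀ i j, Commute (x i) (x j)) ∧ ∀ i, (x i).det = 1}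

namespace CommTuple

section Conjugation

variable {ι m : Type*} [Fintype m] [DecidableEq m]

theorem continuous_val_apply (i : ι) : Continuous fun x : CommTuple ι m => x.1 i :=
  (continuous_apply i).comp continuous_subtype_val

instance : One (CommTuple ι m) :=
  ⟨⟨1, fun _ _ => Commute.one_left _, fun _ => det_one⟩⟩

instance : SMul (GL m ℂ) (CommTuple ι m) where
  smul u x := ⟨fun i => u * x.1 i * u⁻¹.val, fun i j => by
    rw [commute_conj_iff]
    simpa only [mul_assoc, Units.inv_mul_cancel_left, Units.inv_mul, mul_one] using x.2.1 i j,
    fun i => by rw [det_units_conj, x.2.2]⟩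

theorem smul_val_apply (u : GL m ℂ) (x : CommTuple ι m) (i : ι) :
    (u • x).1 i = u * x.1 i * u⁻¹.val :=
  rfl

instance : MulAction (GL m ℂ) (CommTuple ι m) where
  one_smul x := by
    ext1
    funext i
    simp [smul_val_apply]
  mul_smul u v x := by
    ext1
    funext i
    simp [smul_val_apply, mul_assoc]

theorem smul_one_eq_one (u : GL m ℂ) : u • (1 : CommTuple ι m) = 1 := by
  ext1
  funext i
  change u * (1 : Matrix m m ℂ) * u⁻¹.val = 1
  rw [mul_one, Units.mul_inv]

theorem smul_eq_self {u : GL m ℂ} {x : CommTuple ι m} (hu : ∀ i, Commute (x.1 i) u) :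
    u • x = x := by
  ext1
  funext i
  rw [smul_val_apply, ← (hu i).eq, Units.mul_inv_cancel_right]

instance : ContinuousSMul (GL m ℂ) (CommTuple ι m) := by
  refine ⟨Continuous.subtype_mk (continuous_pi fun i => ?_) _⟩
  exact ((Units.continuous_val.comp continuous_fst).mul
    ((continuous_val_apply i).comp continuous_snd)).mul
    (Units.continuous_coe_inv.comp continuous_fst)

end Conjugation

section Toral

open Path.Homotopic.Quotient (mk trans_assoc)

variable {ι m : Type*} [Fintype m] [DecidableEq m]

/-- The tuples all of whose entries are diagonal in the basis `h`, that is, the tuples of elements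
of a maximal torus of `SL(m, ℂ)`. -/
def torus (ι : Type*) (h : GL m ℂ) : Set (CommTuple ι m) :=
  {x | ∀ i, IsDiagIn h (x.1 i)}

theorem one_mem_torus (h : GL m ℂ) : 1 ∈ torus ι h :=
  fun _ => isDiagIn_one h

theorem smul_mem_torus {h : GL m ℂ} {x : CommTuple ι m} (u : GL m ℂ) (hx : x ∈ torus ι h) :
    u • x ∈ torus ι (u * h) := fun i => by
  obtain ⟨d, hd⟩ := isDiagIn_iff_exists_eq.mp (hx i)
  refine isDiagIn_iff_exists_eq.mpr ⟨d, ?_⟩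
  simp [smul_val_apply, hd, mul_assoc]

/-- The homotopy class of paths `e` issuing from the trivial tuple contains a path of tuples
which are simultaneously diagonal in a single basis. -/
def IsToral {z : CommTuple ι m} (e : Path.Homotopic.Quotient 1 z) : Prop :=
  ∃ (h : GL m ℂ) (p : Path 1 z), mk p = e ∧ ∀ t, p t ∈ torus ι h

theorem mk_trans_mk_eq_of_eq_smul {z z' : CommTuple ι m} {u : GL m ℂ} {v : Path 1 u}
    {p : Path 1 z} {q : Path z z'} {p' : Path 1 z'}
    (hq : ∀ s, q s = v s • z) (hp' : ∀ t, p' t = u • p t) :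
    (mk p).trans (mk q) = mk p' := by
  have hsquare := mk_trans_mk_eq_of_square (f := fun ts : I × I => v ts.2 • p ts.1)
    (p := p) (q := q) (p' := p') (q' := Path.refl 1) (by fun_prop)
    (by simp) (by simpa using hq) (by simpa using hp') (by simp [smul_one_eq_one])
  simpa using hsquare

theorem IsToral.exists_path_mem_torus {z : CommTuple ι m} {e : Path.Homotopic.Quotient 1 z}
    (he : IsToral e) {g : GL m ℂ} (hz : z ∈ torus ι g) :
    ∃ p : Path 1 z, mk p = e ∧ ∀ t, p t ∈ torus ι g := by
  obtain ⟨h, p, rfl, hp⟩ := he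
  have hz' : z ∈ torus ι h := p.target ▸ hp 1
  obtain ⟨u, hzu, hug⟩ := exists_commute_isDiagIn_conj hz' hz
  obtain ⟨v, hv⟩ := exists_path_generalLinearGroup u
  let p' : Path 1 z := ⟨⟨fun t => u • p t, by fun_prop⟩, by simp [smul_one_eq_one],
    by simp [smul_eq_self hzu]⟩
  have hp' := mk_trans_mk_eq_of_eq_smul (v := v) (p := p) (q := Path.refl z) (p' := p')
    (fun s => (smul_eq_self fun i => hv s _ (hzu i)).symm) fun t => rfl
  exact ⟨p', by simpa using hp'.symm, fun t i => hug _ (hp t i)⟩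

theorem IsToral.trans_mk_of_eq_smul {z z' : CommTuple ι m} {e : Path.Homotopic.Quotient 1 z}
    (he : IsToral e) {u : GL m ℂ} (v : Path 1 u) {q : Path z z'} (hq : ∀ t, q t = v t • z) :
    IsToral (e.trans (mk q)) := by
  obtain ⟨h, p, rfl, hp⟩ := he
  have hz' : u • z = z' := by simpa using (hq 1).symm
  let p' : Path 1 z' := ⟨⟨fun t => u • p t, by fun_prop⟩, by simp [smul_one_eq_one],
    by simp [hz']⟩
  exact ⟨u * h, p', (mk_trans_mk_eq_of_eq_smul hq fun _ => rfl).symm,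
    fun t => smul_mem_torus u (hp t)⟩

theorem IsToral.trans_mk {z z' : CommTuple ι m} {e : Path.Homotopic.Quotient 1 z}
    (he : IsToral e) {h : GL m ℂ} {q : Path z z'} (hq : ∀ t, q t ∈ torus ι h) :
    IsToral (e.trans (mk q)) := by
  obtain ⟨p, rfl, hp⟩ := he.exists_path_mem_torus (q.source ▸ hq 0)
  refine ⟨h, p.trans q, rfl, fun t => ?_⟩
  rw [Path.trans_apply]
  split_ifs
  exacts [hp _, hq _]

end Toral

section Link

open Path.Homotopic.Quotient (mk)
open AffineMap (lineMap lineMap_apply_module)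

variable {ι m : Type*} [Fintype m] [DecidableEq m]

/-- Two commuting tuples are linked if they commute with each other and the segments joining their
entries have determinants in the slit plane, so that the segments can be rescaled to a path of
commuting tuples of determinant one. -/
structure IsLinked (x y : CommTuple ι m) : Prop where
  commute : ∀ i j, Commute (x.1 i) (y.1 j)
  det_mem : ∀ (s : I) i, (lineMap (x.1 i) (y.1 i) (s : ℂ)).det ∈ Complex.slitPlane

namespace IsLinked

/-- The point at time `s` of the path joining two linked tuples. -/
noncomputable def point {x y : CommTuple ι m} (hxy : IsLinked x y) (s : I) : CommTuple ι m :=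
  ⟨fun i => normalizeDet (lineMap (x.1 i) (y.1 i) (s : ℂ)), fun i j =>
    ((commute_lineMap_right
      (commute_lineMap_right (x.2.1 j i) (hxy.commute j i) _).symm
      (commute_lineMap_right (hxy.commute i j).symm (y.2.1 j i) _).symm
        _).smul_left _).smul_right _,
    fun i => det_normalizeDet (Complex.slitPlane_ne_zero (hxy.det_mem s i))⟩

theorem continuous_point {T : Type*} [TopologicalSpace T] {x y : T → CommTuple ι m} {s : T → I}
    (hx : Continuous x) (hy : Continuous y) (hs : Continuous s) (hxy : ∀ t, IsLinked (x t) (y t)) :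
    Continuous fun t => (hxy t).point (s t) := by
  refine Continuous.subtype_mk (continuous_pi fun i => ?_) _
  have hxi : Continuous fun t => (x t).1 i := (continuous_val_apply i).comp hx
  have hyi : Continuous fun t => (y t).1 i := (continuous_val_apply i).comp hy
  have hline : Continuous fun t => lineMap ((x t).1 i) ((y t).1 i) (s t : ℂ) := by
    simp only [lineMap_apply_module]
    fun_prop
  exact continuousOn_normalizeDet.comp_continuous hline fun t => (hxy t).det_mem (s t) i

theorem point_zero {x y : CommTuple ι m} (hxy : IsLinked x y) : hxy.point 0 = x := by
  ext1
  funext i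
  simp [point, normalizeDet_of_det_eq_one (x.2.2 i)]

theorem point_one {x y : CommTuple ι m} (hxy : IsLinked x y) : hxy.point 1 = y := by
  ext1
  funext i
  simp [point, normalizeDet_of_det_eq_one (y.2.2 i)]

/-- The path joining two linked tuples by rescaled segments. -/
noncomputable def path {x y : CommTuple ι m} (hxy : IsLinked x y) : Path x y where
  toFun := hxy.point
  continuous_toFun := continuous_point continuous_const continuous_const continuous_id fun _ => hxy
  source' := hxy.point_zero
  target' := hxy.point_one

theorem path_mem_torus {x y : CommTuple ι m} (hxy : IsLinked x y) {h : GL m ℂ}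
    (hx : x ∈ torus ι h) (hy : y ∈ torus ι h) (s : I) : hxy.path s ∈ torus ι h :=
  fun i => ((hx i).lineMap (hy i) _).smul _

end IsLinked

theorem mk_trans_mk_path_of_isLinked {x x' y y' : CommTuple ι m} {γ : Path x x'} {δ : Path y y'}
    (hγδ : ∀ t, IsLinked (γ t) (δ t)) (hxy : IsLinked x y) (hxy' : IsLinked x' y') :
    (mk γ).trans (mk hxy'.path) = (mk hxy.path).trans (mk δ) := by
  refine mk_trans_mk_eq_of_square (f := fun ts => (hγδ ts.1).point ts.2)
    (IsLinked.continuous_point (by fun_prop) (by fun_prop) (by fun_prop) _)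
    (fun t => (hγδ t).point_zero.symm) (fun s => ?_) (fun t => (hγδ t).point_one.symm) fun s => ?_
  · ext1
    simp [IsLinked.path, IsLinked.point]
  · ext1
    simp [IsLinked.path, IsLinked.point]

theorem IsLinked.path_of_isNilpotent {x y z : CommTuple ι m} (hxz : IsLinked x z)
    (hnil : ∀ i, IsNilpotent (x.1 i - z.1 i)) (hxy : IsLinked x y)
    (hzy : ∀ i j, Commute (z.1 i) (y.1 j)) (t : I) : IsLinked (hxz.path t) y := by
  have hpath : ∀ i, (hxz.path t).1 i = lineMap (x.1 i) (z.1 i) (t : ℂ) := fun i =>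
    normalizeDet_of_det_eq_one <|
      (det_lineMap_of_isNilpotent (hxz.commute i i) (hnil i) _).trans (x.2.2 i)
  constructor
  · intro i j
    rw [hpath]
    exact (commute_lineMap_right (hxy.commute i j).symm (hzy i j).symm _).symm
  · intro s i
    rw [hpath, det_lineMap_lineMap_of_isNilpotent (hxz.commute i i) (hxy.commute i i) (hzy i i)
      (hnil i)]
    exact hxy.det_mem s i

theorem mk_path_trans_mk_path_of_isNilpotent {x y z : CommTuple ι m} (hxz : IsLinked x z)
    (hnil : ∀ i, IsNilpotent (x.1 i - z.1 i)) (hxy : IsLinked x y) (hzy : IsLinked z y) :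
    (mk hxz.path).trans (mk hzy.path) = mk hxy.path := by
  have hsquare := mk_trans_mk_path_of_isLinked (δ := Path.refl y)
    (hxz.path_of_isNilpotent hnil hxy hzy.commute) hxy hzy
  simpa using hsquare

end Link

section Anchor

open Path.Homotopic.Quotient (mk)
open AffineMap (lineMap)

variable {ι m : Type*} [Fintype m] [DecidableEq m]

theorem exists_mem_torus_of_commute {x y : CommTuple ι m} {g h : GL m ℂ} (hx : x ∈ torus ι g)
    (hy : y ∈ torus ι h) (hxy : ∀ i j, Commute (x.1 i) (y.1 j)) :
    ∃ k : GL m ℂ, x ∈ torus ι k ∧ y ∈ torus ι k := by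
  obtain ⟨k, hk⟩ := exists_isDiagIn_of_isSemisimple (f := Sum.elim x.1 y.1)
    (by
      rintro (i | i) (j | j)
      exacts [x.2.1 i j, hxy i j, (hxy j i).symm, y.2.1 i j])
    (by
      rintro (i | i)
      exacts [(hx i).isSemisimple_toLin', (hy i).isSemisimple_toLin'])
  exact ⟨k, fun i => hk (.inl i), fun i => hk (.inr i)⟩

/-- `y` is an anchor of `x` if it is simultaneously diagonalizable, commutes with everything that
commutes with `x`, and is joined to `x` by segments with determinants in the slit plane. The
semisimple part of `x` is an anchor, and unlike semisimple parts anchors can be chosen to vary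
continuously with `x`. -/
structure IsAnchor (x y : CommTuple ι m) : Prop where
  exists_mem_torus : ∃ h, y ∈ torus ι h
  commute : ∀ A, (∀ i, Commute A (x.1 i)) → ∀ j, Commute A (y.1 j)
  det_mem : ∀ (s : I) i, (lineMap (x.1 i) (y.1 i) (s : ℂ)).det ∈ Complex.slitPlane

theorem IsAnchor.isLinked {x y : CommTuple ι m} (h : IsAnchor x y) : IsLinked x y :=
  ⟨fun i => h.commute _ (x.2.1 i), h.det_mem⟩

theorem isAnchor_self {x : CommTuple ι m} {h : GL m ℂ} (hx : x ∈ torus ι h) : IsAnchor x x :=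
  ⟨⟨h, hx⟩, fun _ hA => hA, fun s i => by simp [x.2.2 i]⟩

theorem IsAnchor.of_isNilpotent_sub {x z : CommTuple ι m} {h : GL m ℂ} (hz : z ∈ torus ι h)
    (hcomm : ∀ A, (∀ i, Commute A (x.1 i)) → ∀ j, Commute A (z.1 j))
    (hnil : ∀ i, IsNilpotent (x.1 i - z.1 i)) : IsAnchor x z :=
  ⟨⟨h, hz⟩, hcomm, fun s i => by
    simp [det_lineMap_of_isNilpotent (hcomm _ (x.2.1 i) i) (hnil i), x.2.2 i]⟩

theorem exists_isAnchor_isNilpotent_sub (x : CommTuple ι m) :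
    ∃ z, IsAnchor x z ∧ ∀ i, IsNilpotent (x.1 i - z.1 i) := by
  obtain ⟨h, z, hz, hnil, hcomm⟩ := exists_isDiagIn_isNilpotent_sub x.2.1
  have hdet : ∀ i, (z i).det = 1 := fun i => by
    have := det_lineMap_of_isNilpotent (hcomm i _ (Commute.refl _)) (hnil i) 1
    rwa [AffineMap.lineMap_apply_one, x.2.2 i] at this
  exact ⟨⟨z, fun i j => (hz i).commute (hz j), hdet⟩,
    .of_isNilpotent_sub hz (fun A hA j => hcomm j A (hA j)) hnil, hnil⟩

theorem isToral_trans_mk_path_iff_of_isNilpotent {x y z : CommTuple ι m}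
    (e : Path.Homotopic.Quotient 1 x) (hz : IsAnchor x z) (hnil : ∀ i, IsNilpotent (x.1 i - z.1 i))
    (hy : IsAnchor x y) :
    IsToral (e.trans (mk hz.isLinked.path)) ↔ IsToral (e.trans (mk hy.isLinked.path)) := by
  have hcomm : ∀ i j, Commute (z.1 i) (y.1 j) :=
    fun i => hy.commute _ fun j => (hz.commute _ (x.2.1 j) i).symm
  have hzy : IsLinked z y := by
    simpa using hz.isLinked.path_of_isNilpotent hnil hy.isLinked hcomm 1
  obtain ⟨_, hz'⟩ := hz.exists_mem_torus
  obtain ⟨_, hy'⟩ := hy.exists_mem_torus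
  obtain ⟨k, hzk, hyk⟩ := exists_mem_torus_of_commute hz' hy' hcomm
  have hpath := hzy.path_mem_torus hzk hyk
  rw [← mk_path_trans_mk_path_of_isNilpotent hz.isLinked hnil hy.isLinked hzy,
    ← Path.Homotopic.Quotient.trans_assoc]
  refine ⟨fun h => h.trans_mk hpath, fun h => ?_⟩
  simpa [Path.Homotopic.Quotient.trans_assoc, Path.Homotopic.Quotient.mk_symm] using
    h.trans_mk (q := hzy.path.symm) fun t => hpath _

/-- The homotopy class `e` from the trivial tuple to `x` becomes toral when it is continued to an
anchor of `x`. By `isGood_iff_isToral` the choice of the anchor is immaterial. -/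
def IsGood {x : CommTuple ι m} (e : Path.Homotopic.Quotient 1 x) : Prop :=
  ∃ (y : CommTuple ι m) (hy : IsAnchor x y), IsToral (e.trans (mk hy.isLinked.path))

theorem isGood_iff_isToral {x y : CommTuple ι m} {e : Path.Homotopic.Quotient 1 x}
    (hy : IsAnchor x y) : IsGood e ↔ IsToral (e.trans (mk hy.isLinked.path)) := by
  refine ⟨fun ⟨y', hy', h⟩ => ?_, fun h => ⟨y, hy, h⟩⟩
  obtain ⟨z, hz, hnil⟩ := exists_isAnchor_isNilpotent_sub x
  rwa [← isToral_trans_mk_path_iff_of_isNilpotent e hz hnil hy,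
    isToral_trans_mk_path_iff_of_isNilpotent e hz hnil hy']

end Anchor

section Local

open Path.Homotopic.Quotient (mk trans_assoc)
open AffineMap (lineMap lineMap_apply_module)

variable {ι m : Type*} [Fintype m] [DecidableEq m]

theorem exists_continuousOn_commute_conj_of_isNilpotent_sub {a s : Matrix m m ℂ} {h : GL m ℂ}
    (hs : IsDiagIn h s) (has : Commute a s) (hnil : IsNilpotent (a - s)) :
    ∃ U ∈ 𝓝 a, ∃ w : Matrix m m ℂ → GL m ℂ, ContinuousOn w U ∧ w a = 1 ∧
      ∀ b ∈ U, ∀ A, Commute A b → Commute A (w b * s * (w b)⁻¹.val) := by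
  open scoped Matrix.Norms.Operator in
  refine exists_continuousOn_commute_conj has
    (fun X hX => commute_of_isNilpotent_sub hs.isSemisimple_toLin' has hnil hX) fun X hX => ?_
  rw [bracket_eq_zero_iff] at hX ⊢
  exact hs.commute_of_commute_lie hX

theorem exists_continuousOn_commute_smul [Finite ι] {x z : CommTuple ι m} {h : GL m ℂ}
    (hz : z ∈ torus ι h) (hxz : ∀ i j, Commute (x.1 i) (z.1 j))
    (hnil : ∀ i, IsNilpotent (x.1 i - z.1 i)) :
    ∃ U ∈ 𝓝 x, ∃ u : CommTuple ι m → GL m ℂ, ContinuousOn u U ∧ u x = 1 ∧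
      ∀ y ∈ U, ∀ A, (∀ i, Commute A (y.1 i)) → ∀ j, Commute A ((u y • z).1 j) := by
  cases nonempty_fintype ι
  obtain ⟨c, hc⟩ := exists_commute_of_commute_sum hz
  let a : CommTuple ι m → Matrix m m ℂ := fun y => ∑ i, c i • y.1 i
  have ha : Continuous a :=
    continuous_finsetSum _ fun i _ => (continuous_val_apply i).fun_const_smul (c i)
  have haz : Commute (a x) (a z) :=
    Commute.sum_left _ _ _ fun i _ => Commute.sum_right _ _ _ fun j _ =>
      ((hxz i j).smul_left _).smul_right _
  have hanil : IsNilpotent (a x - a z) := by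
    rw [← Finset.sum_sub_distrib]
    refine Commute.isNilpotent_sum (fun i _ => ?_) fun i j _ _ => ?_
    · rw [← smul_sub]
      exact (hnil i).smul _
    · simp only [← smul_sub]
      exact ((((x.2.1 i j).sub_right (hxz i j)).sub_left
        ((hxz j i).symm.sub_right (z.2.1 i j))).smul_left _).smul_right _
  obtain ⟨U, hU, w, hw, hw1, hwU⟩ := exists_continuousOn_commute_conj_of_isNilpotent_sub
    (isDiagIn_sum _ fun i => (hz i).smul (c i)) haz hanil
  refine ⟨a ⁻¹' U, ha.continuousAt hU, w ∘ a, hw.comp ha.continuousOn fun _ hy => hy, hw1,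
    fun y hy A hA j => ?_⟩
  have hconj := hwU (a y) hy A (Commute.sum_right _ _ _ fun i _ => (hA i).smul_right _)
  exact (commute_conj_iff _).mpr (hc _ ((commute_conj_iff _).mp hconj) j)

theorem eventually_det_lineMap_mem_slitPlane [Finite ι] {x y : CommTuple ι m}
    (hxy : ∀ (s : I) i, (lineMap (x.1 i) (y.1 i) (s : ℂ)).det ∈ Complex.slitPlane) :
    ∀ᶠ p in 𝓝 (x, y), ∀ (s : I) i,
      (lineMap (p.1.1 i) (p.2.1 i) (s : ℂ)).det ∈ Complex.slitPlane := by
  have hcont : ∀ i, Continuous fun q : (CommTuple ι m × CommTuple ι m) × I =>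
      (lineMap (q.1.1.1 i) (q.1.2.1 i) (q.2 : ℂ)).det := fun i => by
    simp only [lineMap_apply_module]
    have hx := (continuous_val_apply i).comp
      (continuous_fst.comp (continuous_fst (X := CommTuple ι m × CommTuple ι m) (Y := I)))
    have hy := (continuous_val_apply i).comp
      (continuous_snd.comp (continuous_fst (X := CommTuple ι m × CommTuple ι m) (Y := I)))
    fun_prop
  have hloc : ∀ s : I, ∀ᶠ q in 𝓝 ((x, y), s), ∀ i,
      (lineMap (q.1.1.1 i) (q.1.2.1 i) (q.2 : ℂ)).det ∈ Complex.slitPlane := fun s =>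
    Filter.eventually_all.mpr fun i =>
      (hcont i).continuousAt (Complex.isOpen_slitPlane.mem_nhds (hxy s i))
  have := isCompact_univ.eventually_forall_of_forall_eventually (x₀ := (x, y))
    (P := fun p (s : I) => ∀ i,
      (lineMap (p.1.1 i) (p.2.1 i) (s : ℂ)).det ∈ Complex.slitPlane) fun s _ => hloc s
  simpa using this

theorem exists_continuousOn_isAnchor_smul [Finite ι] (x : CommTuple ι m) :
    ∃ U ∈ 𝓝 x, ∃ (z : CommTuple ι m) (u : CommTuple ι m → GL m ℂ),
      ContinuousOn u U ∧ ∀ y ∈ U, IsAnchor y (u y • z) := by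
  obtain ⟨z, hz, hnil⟩ := exists_isAnchor_isNilpotent_sub x
  obtain ⟨h, hzh⟩ := hz.exists_mem_torus
  obtain ⟨U, hU, u, hu, hux, hcomm⟩ :=
    exists_continuousOn_commute_smul hzh hz.isLinked.commute hnil
  have htendsto : Filter.Tendsto (fun y => (y, u y • z)) (𝓝 x) (𝓝 (x, z)) := by
    have hcont : ContinuousAt (fun y => (y, u y • z)) x :=
      continuousAt_id.prodMk ((hu.continuousAt hU).smul continuousAt_const)
    simpa [ContinuousAt, hux] using hcont
  refine ⟨_, Filter.inter_mem hU (htendsto (eventually_det_lineMap_mem_slitPlane hz.det_mem)), z, u,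
    hu.mono Set.inter_subset_left, fun y hy => ?_⟩
  exact ⟨⟨_, smul_mem_torus (u y) hzh⟩, hcomm y hy.1, hy.2⟩

theorem IsGood.trans_mk {y y' z : CommTuple ι m} {U : Set (CommTuple ι m)}
    {u : CommTuple ι m → GL m ℂ} (hu : ContinuousOn u U) (hz : ∀ x ∈ U, IsAnchor x (u x • z))
    {γ : Path y y'} (hγ : Set.range γ ⊆ U) {e : Path.Homotopic.Quotient 1 y} (he : IsGood e) :
    IsGood (e.trans (mk γ)) := by
  have hγU : ∀ t, γ t ∈ U := fun t => hγ ⟨t, rfl⟩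
  have huγ : Continuous fun t => u (γ t) := hu.comp_continuous γ.continuous hγU
  have hy : IsAnchor y (u y • z) := hz y (by simpa using hγU 0)
  have hy' : IsAnchor y' (u y' • z) := hz y' (by simpa using hγU 1)
  let δ : Path (u y • z) (u y' • z) :=
    ⟨⟨fun t => u (γ t) • z, huγ.smul continuous_const⟩, by simp, by simp⟩
  let v : Path 1 (u y' * (u y)⁻¹) :=
    ⟨⟨fun t => u (γ t) * (u y)⁻¹, huγ.mul continuous_const⟩, by simp, by simp⟩
  have hδ : ∀ t, δ t = v t • (u y • z) := fun t => by
    rw [smul_smul]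
    exact (congrArg (· • z) (inv_mul_cancel_right (u (γ t)) (u y))).symm
  have htoral := ((isGood_iff_isToral hy).mp he).trans_mk_of_eq_smul v hδ
  have hsquare := mk_trans_mk_path_of_isLinked (γ := γ) (δ := δ)
    (fun t => (hz _ (hγU t)).isLinked) hy.isLinked hy'.isLinked
  rwa [isGood_iff_isToral hy', trans_assoc, hsquare, ← trans_assoc]

end Local

section MaximalTorus

open Path.Homotopic.Quotient (mk)

variable {ι m : Type*} [Fintype m] [DecidableEq m]

/-- The parametrization of the diagonal tuples by tuples of invertible diagonal entries, where the
entry at `a₀` is corrected to make the determinants equal to one. -/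
def torusTuple (ι : Type*) (a₀ : m) : C(ι → m → ℂˣ, CommTuple ι m) where
  toFun c := ⟨fun i => diagonalUnits (c i * (Pi.mulSingle a₀ (∏ b, c i b))⁻¹),
    fun _ _ => ((Commute.all _ _).map diagonalUnits).map (Units.coeHom (Matrix m m ℂ)), fun i => by
      have hdet := det_diagonalUnits (c i * (Pi.mulSingle a₀ (∏ b, c i b))⁻¹)
      simp only [Pi.mul_apply, Pi.inv_apply, Finset.prod_mul_distrib, Finset.prod_inv_distrib,
        Finset.prod_pi_mulSingle', Finset.mem_univ, if_true, mul_inv_cancel] at hdet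
      exact congrArg Units.val hdet⟩
  continuous_toFun := by
    refine Continuous.subtype_mk (continuous_pi fun i => ?_) _
    refine Units.continuous_val.comp (continuous_diagonalUnits.comp ?_)
    exact (continuous_apply i).mul ((continuous_mulSingle a₀).comp (by fun_prop)).inv

theorem torusTuple_mem_torus (a₀ : m) (c : ι → m → ℂˣ) : torusTuple ι a₀ c ∈ torus ι 1 :=
  fun _ => isDiagIn_diagonalUnits _

theorem torusTuple_one (a₀ : m) : torusTuple ι a₀ 1 = 1 := by
  ext1
  funext i
  change (diagonalUnits _).val = 1
  simp

theorem exists_torusTuple_eq (a₀ : m) : ∃ f : C(torus ι (1 : GL m ℂ), ι → m → ℂˣ),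
    f ⟨1, one_mem_torus 1⟩ = 1 ∧ ∀ z, torusTuple ι a₀ (f z) = z := by
  have hdiag (z : torus ι (1 : GL m ℂ)) (i : ι) : diagonal (fun a => z.1.1 i a a) = z.1.1 i := by
    have := (z.2 i).diagonal_diag
    rwa [inv_one, Units.val_one, one_mul, mul_one] at this
  have hprod (z : torus ι (1 : GL m ℂ)) (i : ι) : ∏ a, z.1.1 i a a = 1 := by
    rw [← det_diagonal, hdiag, z.1.2.2]
  have hne (z : torus ι (1 : GL m ℂ)) (i : ι) (a : m) : z.1.1 i a a ≠ 0 :=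
    Finset.prod_ne_zero_iff.mp ((hprod z i).trans_ne one_ne_zero) a (Finset.mem_univ a)
  refine ⟨⟨fun z i a => Units.mk0 _ (hne z i a), ?_⟩, ?_, fun z => ?_⟩
  · refine continuous_pi fun i => continuous_pi fun a =>
      Units.isEmbedding_val₀.continuous_iff.mpr ?_
    exact ((continuous_val_apply i).comp continuous_subtype_val).matrix_elem a a
  · ext i a
    exact one_apply_eq a
  · have hprod_units (i : ι) : ∏ a, Units.mk0 _ (hne z i a) = 1 := by
      ext
      simpa using hprod z i
    ext1
    funext i
    change (diagonalUnits _).val = _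
    simp [hprod_units, val_diagonalUnits, hdiag]

theorem exists_isToral [Nonempty m] {z : CommTuple ι m} {h : GL m ℂ} (hz : z ∈ torus ι h) :
    ∃ e : Path.Homotopic.Quotient 1 z, IsToral e := by
  obtain ⟨a₀⟩ := ‹Nonempty m›
  obtain ⟨f, -, hf⟩ := exists_torusTuple_eq (ι := ι) a₀
  have hz₁ : h⁻¹ • z ∈ torus ι 1 := by simpa using smul_mem_torus h⁻¹ hz
  let c : Path 1 (f ⟨h⁻¹ • z, hz₁⟩) := PathConnectedSpace.somePath _ _
  let p : Path 1 z := ⟨⟨fun t => h • torusTuple ι a₀ (c t), by fun_prop⟩,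
    by simp [torusTuple_one, smul_one_eq_one], by simp [hf]⟩
  exact ⟨mk p, h * 1, p, rfl, fun t => smul_mem_torus h (torusTuple_mem_torus a₀ _)⟩

/-- The tuple with `i`-th entry `A` and all other entries trivial. -/
def single [DecidableEq ι] (i : ι) (A : Matrix m m ℂ) (hA : A.det = 1) : CommTuple ι m :=
  ⟨Pi.mulSingle i A, fun j l => by
    simp only [Pi.mulSingle_apply]
    split_ifs
    exacts [Commute.refl A, Commute.one_right _, Commute.one_left _, Commute.one_left _],
    fun j => by
    rw [Pi.mulSingle_apply]
    split_ifs
    exacts [hA, det_one]⟩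

theorem single_eq_one [DecidableEq ι] (i : ι) {A : Matrix m m ℂ} (hA : A.det = 1) (h : A = 1) :
    single i A hA = 1 := by
  subst h
  exact Subtype.ext (Pi.mulSingle_one i)

theorem torusTuple_mulSingle [DecidableEq ι] (a₀ : m) (i : ι) (c : m → ℂˣ)
    (hdet : (diagonalUnits (c * (Pi.mulSingle a₀ (∏ b, c b))⁻¹)).val.det = 1) :
    torusTuple ι a₀ (Pi.mulSingle i c) = single i _ hdet := by
  ext1
  funext j
  change (diagonalUnits _).val = Pi.mulSingle (M := fun _ => Matrix m m ℂ) i _ j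
  obtain rfl | hj := eq_or_ne j i
  · simp
  · simp [hj]

-- Conjugating the factor at `a₀` moves it to `b`, where it cancels the other factor.
theorem isNullLoop_mulSingle [DecidableEq ι] (a₀ : m) (i : ι) (b : m) (l : Path (1 : ℂˣ) 1) :
    IsNullLoop (torusTuple ι a₀) fun t => Pi.mulSingle i (Pi.mulSingle b (l t)) := by
  obtain ⟨P, hP⟩ := exists_conj_diagonalUnits_mulSingle a₀ b
  obtain ⟨v, -⟩ := exists_path_generalLinearGroup P
  let D (a : m) (t : I) : GL m ℂ := diagonalUnits (Pi.mulSingle a (l t))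
  have hD (a : m) : Continuous (D a) :=
    continuous_diagonalUnits.comp ((continuous_mulSingle a).comp l.continuous)
  let K (ts : I × I) : GL m ℂ := D b ts.1 * (v ts.2 * (D a₀ ts.1)⁻¹ * (v ts.2)⁻¹)
  have hK : Continuous K := by fun_prop
  have hKdet (ts : I × I) : (K ts).val.det = 1 := by
    have : (K ts).det = 1 := by
      simp [K, D, det_diagonalUnits]
    exact congrArg Units.val this
  have hK₀ (t : I) : K (t, 0) =
      diagonalUnits (Pi.mulSingle b (l t) *
        (Pi.mulSingle a₀ (∏ a, (Pi.mulSingle b (l t) : m → ℂˣ) a))⁻¹) := by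
    simp [K, D]
  have hK₁ (t : I) : K (t, 1) = 1 := by
    have hconj := conj_inv (a := D a₀ t) (b := P)
    rw [hP] at hconj
    simp only [K, v.target, ← hconj, mul_inv_cancel, D]
  let p : Path (1 : ι → m → ℂˣ) 1 := ⟨⟨fun t => Pi.mulSingle i (Pi.mulSingle b (l t)),
    (continuous_mulSingle i).comp ((continuous_mulSingle b).comp l.continuous)⟩,
    by simp, by simp⟩
  have hsquare : (mk (p.map (torusTuple ι a₀).continuous)).trans (mk (Path.refl _)) =
      (mk (Path.refl _)).trans (mk (Path.refl _)) := by
    refine mk_trans_mk_eq_of_square (f := fun ts => single i (K ts).val (hKdet ts))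
      (Continuous.subtype_mk ((continuous_mulSingle i).comp (Units.continuous_val.comp hK)) _)
      (fun t => ?_) (fun s => ?_) (fun t => ?_) fun s => ?_
    · simp only [hK₀]
      exact torusTuple_mulSingle a₀ i _ _
    · exact (torusTuple_one a₀).trans (single_eq_one i _ (by simp [K, D])).symm
    · exact (torusTuple_one a₀).trans (single_eq_one i _ (by simp [hK₁])).symm
    · exact (torusTuple_one a₀).trans (single_eq_one i _ (by simp [K, D])).symm
  exact ⟨p, rfl, by simpa using hsquare⟩

theorem isNullLoop_torusTuple [Finite ι] (a₀ : m) (p : Path (1 : ι → m → ℂˣ) 1) :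
    IsNullLoop (torusTuple ι a₀) p := by
  classical
  cases nonempty_fintype ι
  have hentry (i : ι) (b : m) :
      IsNullLoop (torusTuple ι a₀) fun t => Pi.mulSingle i (Pi.mulSingle b (p t i b)) :=
    isNullLoop_mulSingle a₀ i b
      ((p.map (f := fun c : ι → m → ℂˣ => c i b) (by fun_prop) : Path (1 : ℂˣ) 1))
  have hprod : ⇑p = ∏ i, ∏ b, fun t => Pi.mulSingle i (Pi.mulSingle b (p t i b)) := by
    funext t i b
    simp [Finset.prod_apply, Pi.mulSingle_apply, ite_apply]
  rw [hprod]
  exact Finset.prod_induction _ _ (fun _ _ => .mul) (isNullLoop_one _) fun i _ =>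
    Finset.prod_induction _ _ (fun _ _ => .mul) (isNullLoop_one _) fun b _ => hentry i b

theorem IsToral.eq_refl [Finite ι] [Nonempty m]
    {e : Path.Homotopic.Quotient (1 : CommTuple ι m) 1} (he : IsToral e) : e = .refl 1 := by
  obtain ⟨a₀⟩ := ‹Nonempty m›
  obtain ⟨f, hf₁, hf⟩ := exists_torusTuple_eq (ι := ι) a₀
  obtain ⟨p, rfl, hp⟩ := he.exists_path_mem_torus (one_mem_torus 1)
  let ℓ : Path (1 : ι → m → ℂˣ) 1 := ⟨⟨fun t => f ⟨p t, hp t⟩, by fun_prop⟩,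
    by simpa using hf₁, by simpa using hf₁⟩
  obtain ⟨q, hq, hnull⟩ := isNullLoop_torusTuple a₀ ℓ
  have hpq (t : I) : q.map (torusTuple ι a₀).continuous t = p t :=
    (congrArg (torusTuple ι a₀) (congrFun hq t)).trans (hf ⟨p t, hp t⟩)
  have htransfer {x : CommTuple ι m} (hx : x = 1) (r : Path x x) (hr : ∀ t, r t = p t)
      (hnull : mk r = .refl x) : mk p = .refl 1 := by
    subst hx
    rwa [← Path.ext (funext hr)]
  exact htransfer (torusTuple_one a₀) _ hpq hnull

end MaximalTorus

section SimplyConnected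

open Path.Homotopic.Quotient (mk)

variable {ι m : Type*} [Fintype m] [DecidableEq m]

theorem exists_isGood [Nonempty m] (x : CommTuple ι m) :
    ∃ e : Path.Homotopic.Quotient 1 x, IsGood e := by
  obtain ⟨z, hz, -⟩ := exists_isAnchor_isNilpotent_sub x
  obtain ⟨h, hzh⟩ := hz.exists_mem_torus
  obtain ⟨e, he⟩ := exists_isToral hzh
  refine ⟨e.trans (mk hz.isLinked.path.symm), z, hz, ?_⟩
  simpa [Path.Homotopic.Quotient.trans_assoc, Path.Homotopic.Quotient.mk_symm] using he

theorem IsGood.eq_refl [Finite ι] [Nonempty m] {e : Path.Homotopic.Quotient (1 : CommTuple ι m) 1}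
    (he : IsGood e) : e = .refl 1 := by
  have hanchor : IsAnchor (1 : CommTuple ι m) 1 := isAnchor_self (one_mem_torus 1)
  have hpath : hanchor.isLinked.path = Path.refl 1 := by
    ext t i : 4
    change normalizeDet (AffineMap.lineMap 1 1 (t : ℂ)) = 1
    rw [AffineMap.lineMap_same_apply, normalizeDet_of_det_eq_one det_one]
  rw [isGood_iff_isToral hanchor, hpath] at he
  exact (by simpa using he : IsToral e).eq_refl

theorem simplyConnectedSpace [Finite ι] [Nonempty m] : SimplyConnectedSpace (CommTuple ι m) := by
  refine simplyConnectedSpace_of_local_transport 1 (G := fun x => IsGood) exists_isGood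
    (fun _ => IsGood.eq_refl) fun x => ?_
  obtain ⟨U, hU, z, u, hu, hz⟩ := exists_continuousOn_isAnchor_smul x
  exact ⟨U, hU, fun _ _ _ hγ _ he => he.trans_mk hu hz hγ⟩

end SimplyConnected

/-- Commuting tuples of matrices of determinant one are the commuting tuples in `SL(n, ℂ)`. -/
def homeomorphCommTuples (k n : ℕ) :
    CommTuple (Fin k) (Fin n) ≃ₜ commTuples (SpecialLinearGroup (Fin n) ℂ) k where
  toFun x := ⟨fun i => ⟨x.1 i, x.2.2 i⟩, fun i j => Subtype.ext (x.2.1 i j).eq⟩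
  invFun y := ⟨fun i => (y.1 i).1, fun i j => congrArg Subtype.val (y.2 i j), fun i => (y.1 i).2⟩
  continuous_toFun := by
    refine Continuous.subtype_mk (continuous_pi fun i => ?_) _
    exact Continuous.subtype_mk (continuous_val_apply i) _
  continuous_invFun := by
    refine Continuous.subtype_mk (continuous_pi fun i => ?_) _
    exact continuous_subtype_val.comp ((continuous_apply i).comp continuous_subtype_val)

end CommTuple

/-- For every `k ≥ 1` and `n ≥ 2`, the space `Hom(ℤᵏ, SL(n,ℂ))` of
commuting `k`-tuples in `SL(n,ℂ)` is path-connected and simply connected. -/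
theorem stmt2 (k n : ℕ) (hk : 1 ≤ k) (hn : 2 ≤ n) :
    PathConnectedSpace (commTuples (Matrix.SpecialLinearGroup (Fin n) ℂ) k) ∧
    SimplyConnectedSpace (commTuples (Matrix.SpecialLinearGroup (Fin n) ℂ) k) := by
  have : Nonempty (Fin n) := ⟨⟨0, by lia⟩⟩
  have : SimplyConnectedSpace (CommTuple (Fin k) (Fin n)) := CommTuple.simplyConnectedSpace
  have : SimplyConnectedSpace (commTuples (Matrix.SpecialLinearGroup (Fin n) ℂ) k) :=
    (CommTuple.homeomorphCommTuples k n).symm.toHomotopyEquiv.simplyConnectedSpace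
  exact ⟨inferInstance, this⟩
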